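/- Let (λ_k, z_k, z̃_k, ε_k) be NE-HPE sequences for T with parameter σ, distance generating function w ∈ 𝒟_Z(m,M), and initial point z₀ ∈ Z, and set r_k := (1/λ_k)(∇w(z_{k−1}) − ∇w(z_k)). Then for every k ≥ 1 and every z ∈ Z: (i) (dw)_{z_{k−1}}(z) − (dw)_{z_k}(z) = (dw)_{z_{k−1}}(z̃_k) − (dw)_{z_k}(z̃_k) + λ_k⟨r_k, z̃_k − z⟩; (ii) (dw)_{z_{k−1}}(z) − (dw)_{z_k}(z) ≥ (1−σ)(dw)_{z_{k−1}}(z̃_k) + λ_k(⟨r_k, z̃_k − z⟩ + ε_k); and (iii) (dw)_{z₀}(z) − (dw)_{z_k}(z) ≥ (1−σ) Σ_{i=1}^{k} (dw)_{z_{i−1}}(z̃_i) + Σ_{i=1}^{k} λ_i(⟨r_i, z̃_i − z⟩ + ε_i). -/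

import Mathlib

open RealInnerProductSpace Filter

/-- The dual (extended) seminorm of a seminorm `p`:
`‖v‖_* = sup { ⟪v, z⟫ : p z ≤ 1 }`, valued in `[-∞, ∞]`. -/
noncomputable def dualSN {E : Type*} [NormedAddCommGroup E] [InnerProductSpace ℝ E]
    (p : E → ℝ) (v : E) : EReal :=
  ⨆ z : {z : E // p z ≤ 1}, ((⟪v, z.1⟫ : ℝ) : EReal)

/-- The Bregman distance `(dw)_z(z') := w(z') - w(z) - ⟪∇w(z), z' - z⟫`
associated with `w`, whose gradient is `gw`. -/
noncomputable def breg {E : Type*} [NormedAddCommGroup E] [InnerProductSpace ℝ E]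
    (w : E → ℝ) (gw : E → E) (z z' : E) : ℝ :=
  w z' - w z - ⟪gw z, z' - z⟫

/-- `w ∈ 𝒟_Z(m, M)`: `w` is differentiable on `Z` with gradient `gw`, is `m`-strongly
convex with respect to the seminorm `p` on `Z`, and `gw` is `M`-Lipschitz from `p` to the
dual seminorm of `p` on `Z`. -/
structure IsDGF {E : Type*} [NormedAddCommGroup E] [InnerProductSpace ℝ E]
    [FiniteDimensional ℝ E]
    (Z : Set E) (p : Seminorm ℝ E) (m M : ℝ) (w : E → ℝ) (gw : E → E) : Prop where
  diff : ∀ z ∈ Z, HasGradientAt w (gw z) z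
  strconv : ∀ z ∈ Z, ∀ z' ∈ Z, m / 2 * (p (z - z'))^2 ≤ w z' - w z - ⟪gw z, z' - z⟫
  lips : ∀ z ∈ Z, ∀ z' ∈ Z, dualSN ⇑p (gw z - gw z') ≤ ((M * p (z - z') : ℝ) : EReal)

/-- A set-valued operator `T : E ⇉ E` is monotone. -/
def MonoOp {E : Type*} [NormedAddCommGroup E] [InnerProductSpace ℝ E]
    (T : E → Set E) : Prop :=
  ∀ z z' t t' : E, t ∈ T z → t' ∈ T z' → 0 ≤ ⟪z - z', t - t'⟫

/-- A set-valued operator `T : E ⇉ E` is maximal monotone. -/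
def MaxMonoOp {E : Type*} [NormedAddCommGroup E] [InnerProductSpace ℝ E]
    (T : E → Set E) : Prop :=
  MonoOp T ∧ ∀ T' : E → Set E, MonoOp T' → (∀ z, T z ⊆ T' z) → T' = T

/-- The ε-enlargement `T^[ε]` of a monotone operator `T`. -/
def epsEnl {E : Type*} [NormedAddCommGroup E] [InnerProductSpace ℝ E]
    (T : E → Set E) (ε : ℝ) (z : E) : Set E :=
  {t | ∀ z' t' : E, t' ∈ T z' → -ε ≤ ⟪t - t', z - z'⟫}

/-- NE-HPE sequences `(λ_k, z_k, z̃_k, ε_k)` for `T`, with parameter `σ`, distance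
generating function `w` (with gradient `gw`) and initial point `z_0 = zs 0 ∈ Z`. -/
structure NEHPE {E : Type*} [NormedAddCommGroup E] [InnerProductSpace ℝ E]
    (Z : Set E) (w : E → ℝ) (gw : E → E) (T : E → Set E) (σ : ℝ)
    (lam : ℕ → ℝ) (zs : ℕ → E) (zt : ℕ → E) (ε : ℕ → ℝ) : Prop where
  lam_pos : ∀ k, 1 ≤ k → 0 < lam k
  zs_mem : ∀ k, zs k ∈ Z
  zt_mem : ∀ k, 1 ≤ k → zt k ∈ Z
  eps_nonneg : ∀ k, 1 ≤ k → 0 ≤ ε k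
  incl : ∀ k, 1 ≤ k → (1 / lam k) • (gw (zs (k-1)) - gw (zs k)) ∈ epsEnl T (ε k) (zt k)
  err : ∀ k, 1 ≤ k →
    breg w gw (zs k) (zt k) + lam k * ε k ≤ σ * breg w gw (zs (k-1)) (zt k)

/-! The Bregman distance from `x` minus the one from `y` is affine in its argument, with linear part
`⟪∇w y - ∇w x, ·⟫`. Comparing its values at `z` and at `z̃_k`, where
`λ_k r_k = ∇w z_{k-1} - ∇w z_k`, gives the identity (i). The relative error criterion bounds
`(dw)_{z_k}(z̃_k)` in (i), which gives (ii), and (ii) telescopes to (iii). -/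

theorem sum_Icc_one_pred_sub_self {G : Type*} [AddCommGroup G] (f : ℕ → G) (n : ℕ) :
    ∑ i ∈ Finset.Icc 1 n, (f (i - 1) - f i) = f 0 - f n := by
  induction n with
  | zero => simp
  | succ n ih =>
    rw [Finset.sum_Icc_succ_top (Nat.le_add_left 1 n), ih, Nat.add_sub_cancel, sub_add_sub_cancel]

section Bregman

variable {E : Type*} [NormedAddCommGroup E] [InnerProductSpace ℝ E]
  {w : E → ℝ} {gw : E → E} {x y u r : E} {l : ℝ}

theorem breg_sub_breg (w : E → ℝ) (gw : E → E) (x y u z : E) :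
    breg w gw x z - breg w gw y z
      = breg w gw x u - breg w gw y u + ⟪gw x - gw y, u - z⟫ := by
  simp only [breg, inner_sub_left, inner_sub_right]
  ring

theorem breg_sub_breg_of_smul_eq (hr : l • r = gw x - gw y) (w : E → ℝ) (u z : E) :
    breg w gw x z - breg w gw y z
      = breg w gw x u - breg w gw y u + l * ⟪r, u - z⟫ := by
  rw [breg_sub_breg w gw x y u z, ← hr, real_inner_smul_left]

theorem le_breg_sub_breg_of_relative_error {σ ε : ℝ} (hr : l • r = gw x - gw y)
    (herr : breg w gw y u + l * ε ≤ σ * breg w gw x u) (z : E) :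
    (1 - σ) * breg w gw x u + l * (⟪r, u - z⟫ + ε) ≤ breg w gw x z - breg w gw y z := by
  rw [breg_sub_breg_of_smul_eq hr w u z]
  linarith

-- The gradient is written with `innerSL` because `HasGradientAt` requires a complete space.
theorem stmt3_general {Z : Set E} (_hgw : ∀ x ∈ Z, HasFDerivAt w (innerSL ℝ (gw x)) x)
    {T : E → Set E} {σ : ℝ} {lam : ℕ → ℝ} {zs zt : ℕ → E} {ε : ℕ → ℝ}
    (hseq : NEHPE Z w gw T σ lam zs zt ε)
    {r : ℕ → E} (hr : ∀ k, r k = (1 / lam k) • (gw (zs (k - 1)) - gw (zs k)))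
    {k : ℕ} (hk : 1 ≤ k) (z : E) :
    (breg w gw (zs (k - 1)) z - breg w gw (zs k) z
        = breg w gw (zs (k - 1)) (zt k) - breg w gw (zs k) (zt k)
          + lam k * ⟪r k, zt k - z⟫)
    ∧ ((1 - σ) * breg w gw (zs (k - 1)) (zt k) + lam k * (⟪r k, zt k - z⟫ + ε k)
        ≤ breg w gw (zs (k - 1)) z - breg w gw (zs k) z)
    ∧ ((1 - σ) * ∑ i ∈ Finset.Icc 1 k, breg w gw (zs (i - 1)) (zt i)
          + ∑ i ∈ Finset.Icc 1 k, lam i * (⟪r i, zt i - z⟫ + ε i)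
        ≤ breg w gw (zs 0) z - breg w gw (zs k) z) := by
  have lam_smul_r (i : ℕ) (hi : 1 ≤ i) : lam i • r i = gw (zs (i - 1)) - gw (zs i) := by
    rw [hr i, one_div, smul_inv_smul₀ (hseq.lam_pos i hi).ne']
  have descent (i : ℕ) (hi : 1 ≤ i) :
      (1 - σ) * breg w gw (zs (i - 1)) (zt i) + lam i * (⟪r i, zt i - z⟫ + ε i)
        ≤ breg w gw (zs (i - 1)) z - breg w gw (zs i) z :=
    le_breg_sub_breg_of_relative_error (lam_smul_r i hi) (hseq.err i hi) z
  refine ⟨breg_sub_breg_of_smul_eq (lam_smul_r k hk) w (zt k) z, descent k hk, ?_⟩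
  rw [Finset.mul_sum, ← Finset.sum_add_distrib,
    ← sum_Icc_one_pred_sub_self (fun i ↦ breg w gw (zs i) z) k]
  exact Finset.sum_le_sum fun i hi ↦ descent i (Finset.mem_Icc.mp hi).1

end Bregman

/-- Basic identities/inequalities for the NE-HPE framework. -/
theorem stmt3
    {E : Type*} [NormedAddCommGroup E] [InnerProductSpace ℝ E] [FiniteDimensional ℝ E]
    (Z : Set E) (p : Seminorm ℝ E) (m M : ℝ) (hm : 0 < m) (hmM : m ≤ M)
    (w : E → ℝ) (gw : E → E) (hw : IsDGF Z p m M w gw)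
    (T : E → Set E) (hT : MaxMonoOp T)
    (hdom : ∀ z, (T z).Nonempty → z ∈ Z) (hsol : ∃ z, 0 ∈ T z)
    (σ : ℝ) (hσ0 : 0 ≤ σ) (hσ1 : σ ≤ 1)
    (lam : ℕ → ℝ) (zs zt : ℕ → E) (ε : ℕ → ℝ)
    (hseq : NEHPE Z w gw T σ lam zs zt ε)
    (r : ℕ → E) (hr : ∀ k, r k = (1 / lam k) • (gw (zs (k - 1)) - gw (zs k)))
    (k : ℕ) (hk : 1 ≤ k) (z : E) (hz : z ∈ Z) :
    (breg w gw (zs (k - 1)) z - breg w gw (zs k) z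
        = breg w gw (zs (k - 1)) (zt k) - breg w gw (zs k) (zt k)
          + lam k * ⟪r k, zt k - z⟫)
    ∧ ((1 - σ) * breg w gw (zs (k - 1)) (zt k) + lam k * (⟪r k, zt k - z⟫ + ε k)
        ≤ breg w gw (zs (k - 1)) z - breg w gw (zs k) z)
    ∧ ((1 - σ) * ∑ i ∈ Finset.Icc 1 k, breg w gw (zs (i - 1)) (zt i)
          + ∑ i ∈ Finset.Icc 1 k, lam i * (⟪r i, zt i - z⟫ + ε i)
        ≤ breg w gw (zs 0) z - breg w gw (zs k) z) :=
  stmt3_general (fun x hx ↦ (hw.diff x hx).hasFDerivAt) hseq hr hk z
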